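/- If a compact metric space X is the union of countably many closed subsets X_i, i = 1, 2, …, then for every abelian group A, dim_A X = sup_i dim_A X_i. -/

import Mathlib

open Set Function

open scoped ENNReal

noncomputable section

/-! ### Alexander–Spanier (Čech) cohomology -/

namespace AS

variable (A : Type*) [AddCommGroup A]

/-- Alexander–Spanier `n`-cochains on `X` with coefficients in `A`. -/
abbrev Cochain (X : Type*) (n : ℕ) : Type _ := (Fin (n + 1) → X) → A

/-- The Alexander–Spanier coboundary operator. -/
def d (X : Type*) (n : ℕ) : Cochain A X n →+ Cochain A X (n + 1) :=
  AddMonoidHom.mk' (fun φ s => ∑ i : Fin (n + 2), ((-1 : ℤ) ^ (i : ℕ)) • φ (s ∘ i.succAbove))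
    (fun φ ψ => funext fun s => by
      simp [smul_add, Finset.sum_add_distrib])

/-- An open cover of `X`. -/
def IsOpenCover {X : Type*} [TopologicalSpace X] (U : Set (Set X)) : Prop :=
  (∀ u ∈ U, IsOpen u) ∧ ⋃₀ U = univ

/-- A tuple is `U`-small if it is contained in a single member of `U`. -/
def Small {X : Type*} (U : Set (Set X)) {k : ℕ} (s : Fin k → X) : Prop :=
  ∃ u ∈ U, ∀ i, s i ∈ u

/-- The subgroup of cochains vanishing on all tuples that are small with respect to
some open cover (i.e. vanishing in a neighbourhood of the diagonal). -/
def locZero (X : Type*) [TopologicalSpace X] (n : ℕ) : AddSubgroup (Cochain A X n) where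
  carrier := {φ | ∃ U, IsOpenCover U ∧ ∀ s : Fin (n + 1) → X, Small U s → φ s = 0}
  zero_mem' := ⟨{univ}, ⟨fun u hu => by rw [mem_singleton_iff] at hu; rw [hu]; exact isOpen_univ,
      by simp⟩, fun s _ => rfl⟩
  add_mem' := by
    rintro φ ψ ⟨U, ⟨hUo, hUc⟩, hφ⟩ ⟨W, ⟨hWo, hWc⟩, hψ⟩
    refine ⟨(fun p : Set X × Set X => p.1 ∩ p.2) '' (U ×ˢ W), ⟨?_, ?_⟩, ?_⟩
    · rintro _ ⟨⟨u, w⟩, ⟨hu, hw⟩, rfl⟩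
      exact (hUo u hu).inter (hWo w hw)
    · apply eq_univ_of_forall
      intro x
      have hx1 : x ∈ ⋃₀ U := hUc ▸ mem_univ x
      have hx2 : x ∈ ⋃₀ W := hWc ▸ mem_univ x
      obtain ⟨u, hu, hxu⟩ := hx1
      obtain ⟨w, hw, hxw⟩ := hx2
      exact ⟨u ∩ w, ⟨⟨u, w⟩, ⟨hu, hw⟩, rfl⟩, hxu, hxw⟩
    · rintro s ⟨_, ⟨⟨u, w⟩, ⟨hu, hw⟩, rfl⟩, hs⟩
      have h1 : φ s = 0 := hφ s ⟨u, hu, fun i => (hs i).1⟩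
      have h2 : ψ s = 0 := hψ s ⟨w, hw, fun i => (hs i).2⟩
      show φ s + ψ s = 0
      rw [h1, h2, add_zero]
  neg_mem' := by
    rintro φ ⟨U, hU, hφ⟩
    exact ⟨U, hU, fun s hs => by show -φ s = 0; rw [hφ s hs, neg_zero]⟩

/-- The Alexander–Spanier cochain complex: cochains modulo locally zero cochains. -/
abbrev QC (X : Type*) [TopologicalSpace X] (n : ℕ) : Type _ := Cochain A X n ⧸ locZero A X n

lemma d_locZero (X : Type*) [TopologicalSpace X] (n : ℕ) :
    locZero A X n ≤ (locZero A X (n + 1)).comap (d A X n) := by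
  rintro φ ⟨U, hU, hφ⟩
  refine ⟨U, hU, fun s ⟨u, hu, hs⟩ => ?_⟩
  show (d A X n φ) s = 0
  have : ∀ i : Fin (n + 2), φ (s ∘ i.succAbove) = 0 :=
    fun i => hφ _ ⟨u, hu, fun j => hs _⟩
  simp only [d, AddMonoidHom.mk'_apply]
  exact Finset.sum_eq_zero fun i _ => by rw [this i, smul_zero]

/-- The induced differential on the Alexander–Spanier complex. -/
def dQ (X : Type*) [TopologicalSpace X] (n : ℕ) : QC A X n →+ QC A X (n + 1) :=
  QuotientAddGroup.map _ _ (d A X n) (d_locZero A X n)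

/-- Cocycles. -/
def cocycles (X : Type*) [TopologicalSpace X] (n : ℕ) : AddSubgroup (QC A X n) :=
  (dQ A X n).ker

/-- Coboundaries (the trivial subgroup in degree `0`). -/
def cobounds (X : Type*) [TopologicalSpace X] (n : ℕ) : AddSubgroup (QC A X n) :=
  match n with
  | 0 => ⊥
  | (m + 1) => (dQ A X m).range

/-- Alexander–Spanier cohomology of `X` with coefficients in `A`; for paracompact Hausdorff
(e.g. metric) spaces this is naturally isomorphic to Čech cohomology. -/
def ASH (n : ℕ) (X : Type*) [TopologicalSpace X] : Type _ :=
  ↥(cocycles A X n) ⧸ ((cobounds A X n).comap (cocycles A X n).subtype)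

instance (n : ℕ) (X : Type*) [TopologicalSpace X] : AddCommGroup (ASH A n X) :=
  inferInstanceAs (AddCommGroup
    (↥(cocycles A X n) ⧸ ((cobounds A X n).comap (cocycles A X n).subtype)))

end AS

namespace AS

variable (A : Type*) [AddCommGroup A]

/-- Pullback of Alexander–Spanier cochains along a map. -/
def pull {X Y : Type*} (f : X → Y) (n : ℕ) : Cochain A Y n →+ Cochain A X n :=
  AddMonoidHom.mk' (fun φ s => φ (f ∘ s)) (fun φ ψ => rfl)

lemma pull_d {X Y : Type*} (f : X → Y) (n : ℕ) (φ : Cochain A Y n) :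
    pull A f (n + 1) (d A Y n φ) = d A X n (pull A f n φ) := rfl

lemma pull_locZero {X Y : Type*} [TopologicalSpace X] [TopologicalSpace Y] {f : X → Y}
    (hf : Continuous f) (n : ℕ) :
    locZero A Y n ≤ (locZero A X n).comap (pull A f n) := by
  rintro φ ⟨U, ⟨hUo, hUc⟩, hφ⟩
  refine ⟨(f ⁻¹' ·) '' U, ⟨?_, ?_⟩, ?_⟩
  · rintro _ ⟨u, hu, rfl⟩
    exact (hUo u hu).preimage hf
  · apply eq_univ_of_forall
    intro x
    have : f x ∈ ⋃₀ U := hUc ▸ mem_univ _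
    obtain ⟨u, hu, hx⟩ := this
    exact ⟨f ⁻¹' u, ⟨u, hu, rfl⟩, hx⟩
  · rintro s ⟨_, ⟨u, hu, rfl⟩, hs⟩
    exact hφ _ ⟨u, hu, fun i => hs i⟩

/-- Pullback on the Alexander–Spanier complex. -/
def pullQ {X Y : Type*} [TopologicalSpace X] [TopologicalSpace Y] {f : X → Y}
    (hf : Continuous f) (n : ℕ) : QC A Y n →+ QC A X n :=
  QuotientAddGroup.map _ _ (pull A f n) (pull_locZero A hf n)

lemma pullQ_d {X Y : Type*} [TopologicalSpace X] [TopologicalSpace Y] {f : X → Y}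
    (hf : Continuous f) (n : ℕ) (x : QC A Y n) :
    pullQ A hf (n + 1) (dQ A Y n x) = dQ A X n (pullQ A hf n x) := by
  refine QuotientAddGroup.induction_on x ?_
  intro φ
  simp only [pullQ, dQ, QuotientAddGroup.map_mk, pull_d]

lemma pullQ_cocycles {X Y : Type*} [TopologicalSpace X] [TopologicalSpace Y] {f : X → Y}
    (hf : Continuous f) (n : ℕ) {x : QC A Y n} (hx : x ∈ cocycles A Y n) :
    pullQ A hf n x ∈ cocycles A X n := by
  have : dQ A Y n x = 0 := hx
  show dQ A X n (pullQ A hf n x) = 0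
  rw [← pullQ_d, this, map_zero]

lemma pullQ_cobounds {X Y : Type*} [TopologicalSpace X] [TopologicalSpace Y] {f : X → Y}
    (hf : Continuous f) (n : ℕ) {x : QC A Y n} (hx : x ∈ cobounds A Y n) :
    pullQ A hf n x ∈ cobounds A X n := by
  match n with
  | 0 =>
    have : x = 0 := hx
    rw [this, map_zero]
    exact (⊥ : AddSubgroup (QC A X 0)).zero_mem
  | (m + 1) =>
    obtain ⟨y, rfl⟩ := hx
    exact ⟨pullQ A hf m y, (pullQ_d A hf m y).symm⟩

/-- The map on cocycles induced by a continuous map. -/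
def pullZ {X Y : Type*} [TopologicalSpace X] [TopologicalSpace Y] {f : X → Y}
    (hf : Continuous f) (n : ℕ) : ↥(cocycles A Y n) →+ ↥(cocycles A X n) :=
  AddMonoidHom.codRestrict ((pullQ A hf n).comp (cocycles A Y n).subtype) _
    (fun x => pullQ_cocycles A hf n x.2)

/-- The homomorphism induced on Alexander–Spanier (Čech) cohomology by a continuous map.
Note the contravariance: a map `f : X → Y` induces `ASHmap : ASH A n Y →+ ASH A n X`. -/
def ASHmap {X Y : Type*} [TopologicalSpace X] [TopologicalSpace Y] {f : X → Y}
    (hf : Continuous f) (n : ℕ) : ASH A n Y →+ ASH A n X :=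
  QuotientAddGroup.map _ _ (pullZ A hf n) (by
    rintro ⟨x, hx⟩ hmem
    have : x ∈ cobounds A Y n := hmem
    exact pullQ_cobounds A hf n this)

end AS

namespace AS

variable (A : Type*) [AddCommGroup A]

/-- Čech cohomology with compact supports: for compact `B` this is the (Alexander–Spanier =
Čech) cohomology of `B` itself, and for noncompact `B` it is that of the one-point
compactification of `B`. -/
def Hc (n : ℕ) (B : Type*) [TopologicalSpace B] : Type _ :=
  open scoped Classical in
  if CompactSpace B then ASH A n B else ASH A n (OnePoint B)

end AS

/-- The cohomological dimension `dim_A X` of a space `X` with respect to an abelian group `A`: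
the supremum of the integers `n` for which there is a locally compact subset `B ⊆ X` with
`H^n_c(B; A) ≠ 0`. -/
noncomputable def cohDim (A : Type*) [AddCommGroup A] (X : Type*) [TopologicalSpace X] : ℕ∞ :=
  sSup {e : ℕ∞ | ∃ n : ℕ, e = (n : ℕ∞) ∧
    ∃ B : Set X, LocallyCompactSpace B ∧ Nontrivial (AS.Hc A n B)}

/-!
A class in `H^{n+1}_c(B)` is carried by a cochain on the one-point compactification `K` of `B`,
and it vanishes if the cochain has a primitive near `K`. Only germs of cochains along subsets of
`K` matter. By tautness and excision, the cohomology of germs along a closed set `F` relative to a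
closed subset `D` is `H_c(F \ D)`, so it vanishes in degree `n + 1` as soon as `n + 1` exceeds the
dimension of `F`. Given closed pieces `F_k` covering `K`, a primitive near a closed set `C`
therefore extends to one near `C ∪ F_k`: the obstruction lies in the relative group of
`(F_k, C ∩ F_k)`. By normality the new primitive is valid on a closed neighbourhood of `C ∪ F_k`;
repeating this for `k = 0, 1, …`, the interiors of the resulting sets cover `K`, so by compactness
finitely many steps suffice. The point at infinity is harmless: in positive degree, the
cone with apex `∞` identifies the cohomology of `K` with that of the pair `(K, ∞)`.
-/

namespace AS

open Filter Topology

section Cochains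

variable {A : Type*} [AddCommGroup A] {X Y : Type*} {n : ℕ}

/-- The cone operator with apex `x`, i.e. evaluation on tuples starting with `x`. It contracts the
complex of all cochains; see `cone_d` and `cone_d_zero`. -/
def cone (x : X) : Cochain A X (n + 1) →+ Cochain A X n :=
  AddMonoidHom.mk' (fun φ s => φ (Fin.cons x s : Fin (n + 2) → X)) fun _ _ => rfl

lemma cochain_ext_cone {φ ψ : Cochain A X (n + 1)} (h : ∀ x, cone x φ = cone x ψ) : φ = ψ :=
  funext fun s => by simpa [cone] using congrFun (h (s 0)) (Fin.tail s)

lemma cone_d (x : X) (φ : Cochain A X (n + 1)) :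
    cone x (d A X (n + 1) φ) = φ - d A X n (cone x φ) := by
  funext s
  have cons_comp_zero : (Fin.cons x s : Fin (n + 3) → X) ∘ Fin.succAbove 0 = s := by
    funext j; simp
  simp only [cone, d, AddMonoidHom.mk'_apply, Pi.sub_apply]
  rw [Fin.sum_univ_succ, cons_comp_zero, sub_eq_add_neg, ← Finset.sum_neg_distrib]
  simp only [Fin.val_zero, pow_zero, one_smul, Fin.val_succ, pow_succ, mul_neg, mul_one, neg_smul,
    Fin.cons_comp_succ_succAbove]
  rfl

lemma cone_d_zero (x : X) (φ : Cochain A X 0) :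
    cone x (d A X 0 φ) = φ - fun _ => φ fun _ => x := by
  funext s
  have cons_comp_one : (Fin.cons x s : Fin 2 → X) ∘ Fin.succAbove 1 = fun _ => x := by
    funext j; fin_cases j; rfl
  simp [cone, d, Fin.sum_univ_two, cons_comp_one, sub_eq_add_neg]

lemma d_const (a : A) : d A X 0 (fun _ => a) = 0 := by
  funext s
  simp [d, Fin.sum_univ_two]

lemma d_d : ∀ {n : ℕ} (φ : Cochain A X n), d A X (n + 1) (d A X n φ) = 0
  | 0, φ => cochain_ext_cone fun x => by rw [cone_d, cone_d_zero, map_sub, d_const]; simp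
  | n + 1, φ => cochain_ext_cone fun x => by rw [cone_d, cone_d, map_sub, d_d]; simp

lemma cone_pull (f : Y → X) (y : Y) (φ : Cochain A X (n + 1)) :
    cone y (pull A f (n + 1) φ) = pull A f n (cone (f y) φ) :=
  funext fun s => congrArg φ (Fin.comp_cons f y s)

/-- The prism operator of two maps `f, g : Y → X`, a cochain homotopy from `f` to `g`. Unfolding
the recursion gives `prism f g φ s = ∑ i, (-1) ^ i • φ (f s₀, …, f sᵢ, g sᵢ, …, g sₙ)`. -/
def prism (f g : Y → X) : ∀ {n : ℕ}, Cochain A X (n + 1) →+ Cochain A Y n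
  | 0 => AddMonoidHom.mk' (fun φ s => φ (Fin.cons (f (s 0)) (g ∘ s) : Fin 2 → X)) fun _ _ => rfl
  | n + 1 => AddMonoidHom.mk' (fun φ s => φ (Fin.cons (f (s 0)) (g ∘ s) : Fin (n + 3) → X) -
      prism f g (cone (f (s 0)) φ) (Fin.tail s)) fun φ ψ => by
    funext s
    simp only [map_add, Pi.add_apply]
    abel

lemma cone_prism (f g : Y → X) (y : Y) (φ : Cochain A X (n + 2)) :
    cone y (prism f g φ) =
      pull A g n (cone (g y) (cone (f y) φ)) - prism f g (cone (f y) φ) := by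
  funext s
  simp [cone, prism, pull, Fin.comp_cons]

lemma prism_d_zero (f g : Y → X) (φ : Cochain A X 0) :
    prism f g (d A X 0 φ) = pull A g 0 φ - pull A f 0 φ := by
  funext s
  have : (fun _ => f (s 0)) = f ∘ s := by funext i; fin_cases i; rfl
  exact (congrFun (cone_d_zero (f (s 0)) φ) (g ∘ s)).trans (by simp [pull, this])

lemma d_prism_add_prism_d (f g : Y → X) (φ : Cochain A X (n + 1)) :
    d A Y n (prism f g φ) + prism f g (d A X (n + 1) φ) =
      pull A g (n + 1) φ - pull A f (n + 1) φ := by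
  induction n with
  | zero =>
    refine cochain_ext_cone fun y => ?_
    have const_prism : (fun _ => prism f g φ fun _ => y : Cochain A Y 0) =
        pull A g 0 (fun _ => cone (f y) φ fun _ => g y) := rfl
    simp only [map_add, map_sub, cone_d, cone_d_zero, cone_prism, cone_pull, prism_d_zero,
      const_prism]
    abel
  | succ n ih =>
    refine cochain_ext_cone fun y => ?_
    have ih := ih (cone (f y) φ)
    simp only [map_add, map_sub, cone_d, cone_prism, cone_pull, ← pull_d]
    rw [← sub_eq_zero] at ih ⊢
    rw [← ih]
    abel

lemma sub_d_pull_sub_prism (f : X → X) (φ : Cochain A X n) (ψ : Cochain A X (n + 1)) :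
    ψ - d A X n (pull A f n φ - prism id f ψ) =
      pull A f (n + 1) (ψ - d A X n φ) - prism id f (d A X (n + 1) ψ) := by
  have pull_id : pull A id (n + 1) ψ = ψ := rfl
  rw [eq_sub_of_add_eq' (d_prism_add_prism_d id f ψ), pull_id]
  simp only [map_sub, pull_d]
  abel

/-- Extension of a cochain by zero along a map `f`, to be used for injective `f`. -/
def extendZero (f : X → Y) (φ : Cochain A X n) : Cochain A Y n :=
  extend (f ∘ ·) φ 0

lemma pull_extendZero {f : X → Y} (hf : Injective f) (φ : Cochain A X n) :
    pull A f n (extendZero f φ) = φ :=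
  funext fun s => hf.comp_left.extend_apply φ 0 s

end Cochains

section Germs

variable {A : Type*} [AddCommGroup A] {X Y : Type*} {n : ℕ}

/-- A cochain vanishes on a set `U` if it is zero on all tuples of points of `U`. -/
def VanishesOn (φ : Cochain A X n) (U : Set X) : Prop :=
  ∀ s, (∀ i, s i ∈ U) → φ s = 0

lemma VanishesOn.mono {φ : Cochain A X n} {U V : Set X} (h : VanishesOn φ V) (hUV : U ⊆ V) :
    VanishesOn φ U :=
  fun s hs => h s fun i => hUV (hs i)

lemma VanishesOn.map_d {φ : Cochain A X n} {U : Set X} (h : VanishesOn φ U) :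
    VanishesOn (d A X n φ) U :=
  fun s hs => (Finset.sum_eq_zero fun i _ => by rw [h (s ∘ i.succAbove) fun j => hs _, smul_zero] :
    ∑ i : Fin (n + 2), ((-1 : ℤ) ^ (i : ℕ)) • φ (s ∘ i.succAbove) = 0)

lemma VanishesOn.map_pull {φ : Cochain A X n} {U : Set X} (h : VanishesOn φ U) (f : Y → X) :
    VanishesOn (pull A f n φ) (f ⁻¹' U) :=
  fun s hs => h (f ∘ s) hs

lemma VanishesOn.map_cone {φ : Cochain A X (n + 1)} {U : Set X} (h : VanishesOn φ U) {x : X}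
    (hx : x ∈ U) : VanishesOn (cone x φ) U :=
  fun _ hs => h _ (Fin.cases hx hs)

lemma VanishesOn.map_prism {φ : Cochain A X (n + 1)} {U : Set X} (h : VanishesOn φ U)
    (f g : Y → X) : VanishesOn (prism f g φ) (f ⁻¹' U ∩ g ⁻¹' U) := by
  induction n with
  | zero => exact fun s hs => h _ (Fin.cases (hs 0).1 fun i => (hs i).2)
  | succ n ih =>
    intro s hs
    have head : φ (Fin.cons (f (s 0)) (g ∘ s) : Fin (n + 3) → X) = 0 :=
      h _ (Fin.cases (hs 0).1 fun i => (hs i).2)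
    have tail : prism f g (cone (f (s 0)) φ) (Fin.tail s) = 0 :=
      ih (h.map_cone (hs 0).1) _ fun i => hs i.succ
    exact (congrArg₂ (· - ·) head tail).trans (sub_zero 0)

lemma VanishesOn.map_extendZero {f : X → Y} {φ : Cochain A X n} {U : Set X} {V : Set Y}
    (h : VanishesOn φ U) (hV : f ⁻¹' V ⊆ U) : VanishesOn (extendZero f φ) V := by
  classical
  intro s hs
  by_cases hfs : ∃ t, f ∘ t = s
  · rw [extendZero, extend_def, dif_pos hfs]
    have hfV : ∀ i, (f ∘ hfs.choose) i ∈ V := by rwa [hfs.choose_spec]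
    exact h _ fun i => hV (hfV i)
  · exact extend_apply' _ _ _ hfs

variable [TopologicalSpace X] [TopologicalSpace Y]

variable (A) in
/-- The cochains with zero germ at every point of `S`: each point of `S` has a neighbourhood on
which the cochain vanishes. Modulo these, cochains on `X` represent germs of cochains along `S`. -/
def locZeroOn (S : Set X) (n : ℕ) : AddSubgroup (Cochain A X n) where
  carrier := {φ | ∀ x ∈ S, ∃ U ∈ 𝓝 x, VanishesOn φ U}
  zero_mem' _ _ := ⟨univ, univ_mem, fun _ _ => rfl⟩
  add_mem' {φ ψ} hφ hψ x hx := by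
    obtain ⟨U, hU, hφU⟩ := hφ x hx
    obtain ⟨V, hV, hψV⟩ := hψ x hx
    refine ⟨U ∩ V, inter_mem hU hV, fun s hs => ?_⟩
    rw [Pi.add_apply, hφU s fun i => (hs i).1, hψV s fun i => (hs i).2, add_zero]
  neg_mem' {φ} hφ x hx := by
    obtain ⟨U, hU, hφU⟩ := hφ x hx
    exact ⟨U, hU, fun s hs => by rw [Pi.neg_apply, hφU s hs, neg_zero]⟩

lemma locZeroOn_univ : locZeroOn A (univ : Set X) n = locZero A X n := by
  refine SetLike.ext fun φ => ⟨fun h => ?_, ?_⟩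
  · refine ⟨{U | IsOpen U ∧ VanishesOn φ U}, ⟨fun U hU => hU.1, sUnion_eq_univ_iff.2 fun x => ?_⟩,
      fun s ⟨U, hU, hs⟩ => hU.2 s hs⟩
    obtain ⟨V, hV, hφV⟩ := h x trivial
    obtain ⟨U, hUV, hU, hxU⟩ := mem_nhds_iff.1 hV
    exact ⟨U, ⟨hU, hφV.mono hUV⟩, hxU⟩
  · rintro ⟨𝒰, ⟨h𝒰o, h𝒰⟩, hφ⟩ x -
    obtain ⟨U, hU, hxU⟩ := sUnion_eq_univ_iff.1 h𝒰 x
    exact ⟨U, (h𝒰o U hU).mem_nhds hxU, fun s hs => hφ s ⟨U, hU, hs⟩⟩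

lemma locZeroOn_anti {S T : Set X} (hST : S ⊆ T) : locZeroOn A T n ≤ locZeroOn A S n :=
  fun _ hφ x hx => hφ x (hST hx)

lemma locZeroOn_union (S T : Set X) :
    locZeroOn A (S ∪ T) n = locZeroOn A S n ⊓ locZeroOn A T n :=
  SetLike.ext fun _ => forall₂_or_left

lemma locZeroOn_empty : locZeroOn A (∅ : Set X) n = ⊤ :=
  top_unique fun _ _ _ hx => hx.elim

lemma VanishesOn.mem_locZeroOn {φ : Cochain A X n} {S U : Set X} (h : VanishesOn φ U)
    (hU : IsOpen U) (hSU : S ⊆ U) : φ ∈ locZeroOn A S n :=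
  fun _ hx => ⟨U, hU.mem_nhds (hSU hx), h⟩

lemma d_mem_locZeroOn {φ : Cochain A X n} {S : Set X} (h : φ ∈ locZeroOn A S n) :
    d A X n φ ∈ locZeroOn A S (n + 1) := fun x hx =>
  let ⟨U, hU, hφU⟩ := h x hx
  ⟨U, hU, hφU.map_d⟩

lemma pull_mem_locZeroOn {φ : Cochain A X n} {S : Set X} (h : φ ∈ locZeroOn A S n) {f : Y → X}
    (hf : Continuous f) : pull A f n φ ∈ locZeroOn A (f ⁻¹' S) n := fun y hy =>
  let ⟨U, hU, hφU⟩ := h (f y) hy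
  ⟨f ⁻¹' U, hf.continuousAt hU, hφU.map_pull f⟩

lemma cone_mem_locZeroOn_singleton {φ : Cochain A X (n + 1)} {x : X}
    (h : φ ∈ locZeroOn A {x} (n + 1)) : cone x φ ∈ locZeroOn A {x} n := by
  rintro _ rfl
  obtain ⟨U, hU, hφU⟩ := h _ rfl
  exact ⟨U, hU, hφU.map_cone (mem_of_mem_nhds hU)⟩

lemma mem_locZeroOn_range_iff {f : Y → X} (hf : IsOpenEmbedding f) {φ : Cochain A X n} :
    φ ∈ locZeroOn A (range f) n ↔ pull A f n φ ∈ locZeroOn A univ n := by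
  refine ⟨fun h => by simpa using pull_mem_locZeroOn h hf.continuous, ?_⟩
  rintro h _ ⟨y, rfl⟩
  obtain ⟨U, hU, hφU⟩ := h y trivial
  refine ⟨f '' U, hf.isOpenMap.image_mem_nhds hU, fun s hs => ?_⟩
  choose t htU hts using hs
  rw [← funext hts]
  exact hφU t htU

lemma mem_locZeroOn_univ_iff {f : Y → X} (hf : IsOpenEmbedding f) {φ : Cochain A X n} :
    φ ∈ locZeroOn A univ n ↔
      pull A f n φ ∈ locZeroOn A univ n ∧ φ ∈ locZeroOn A (range f)ᶜ n := by
  rw [← mem_locZeroOn_range_iff hf, ← AddSubgroup.mem_inf, ← locZeroOn_union, union_compl_self]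

lemma extendZero_mem_locZeroOn {f : X → Y} (hf : IsInducing f) {S : Set Y}
    (hS : S ⊆ range f) {φ : Cochain A X n} (h : φ ∈ locZeroOn A (f ⁻¹' S) n) :
    extendZero f φ ∈ locZeroOn A S n := by
  intro y hy
  obtain ⟨x, rfl⟩ := hS hy
  obtain ⟨U, hU, hφU⟩ := h x hy
  obtain ⟨V, hV, hVU⟩ := hf.nhds_eq_comap x ▸ hU
  exact ⟨V, hV, hφU.map_extendZero hVU⟩

lemma isOpen_setOf_exists_vanishesOn (φ : Cochain A X n) :
    IsOpen {x | ∃ U ∈ 𝓝 x, VanishesOn φ U} :=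
  isOpen_iff_mem_nhds.2 fun _ ⟨U, hU, hφU⟩ =>
    (eventually_mem_nhds_iff.2 hU).mono fun _ hy => ⟨U, hy, hφU⟩

lemma exists_isClosed_superset_mem_locZeroOn [NormalSpace X] {S : Set X} (hS : IsClosed S)
    {φ : Cochain A X n} (h : φ ∈ locZeroOn A S n) :
    ∃ T, IsClosed T ∧ S ⊆ interior T ∧ φ ∈ locZeroOn A T n := by
  obtain ⟨V, hV, hSV, hVφ⟩ :=
    normal_exists_closure_subset hS (isOpen_setOf_exists_vanishesOn φ) h
  exact ⟨closure V, isClosed_closure, hSV.trans (hV.subset_interior_closure), hVφ⟩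

lemma exists_cutoff [NormalSpace X] {C F : Set X} (hC : IsClosed C) (hF : IsClosed F)
    {φ : Cochain A X n} (hφ : φ ∈ locZeroOn A (C ∩ F) n) :
    ∃ φ' : Cochain A X n, ∃ N, IsOpen N ∧ C ⊆ N ∧ VanishesOn φ' N ∧
      φ' - φ ∈ locZeroOn A F n := by
  classical
  set W := {x | ∃ U ∈ 𝓝 x, VanishesOn φ U}
  have hCW : C ⊆ W ∪ Fᶜ := fun x hxC =>
    or_iff_not_imp_right.2 fun hxF => hφ x ⟨hxC, not_not.1 hxF⟩
  obtain ⟨V, hV, hCV, hVW⟩ := normal_exists_closure_subset hC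
    ((isOpen_setOf_exists_vanishesOn φ).union hF.isOpen_compl) hCW
  refine ⟨fun s => if ∀ i, s i ∈ V then 0 else φ s, V, hV, hCV, fun s hs => if_pos hs, ?_⟩
  intro x hxF
  by_cases hxV : x ∈ closure V
  · obtain ⟨U, hU, hφU⟩ := (hVW hxV).resolve_right (not_not.2 hxF)
    refine ⟨U, hU, fun s hs => ?_⟩
    simp [hφU s hs]
  · refine ⟨Vᶜ, mem_of_superset (isClosed_closure.isOpen_compl.mem_nhds hxV)
      (compl_subset_compl.2 subset_closure), fun s hs => ?_⟩
    have : ¬ ∀ i, s i ∈ V := fun h => hs 0 (h 0)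
    simp [this]

end Germs

section RelAcyclic

variable {A : Type*} [AddCommGroup A] {X : Type*} [TopologicalSpace X] {n : ℕ}

variable (A) in
/-- Vanishing of the relative cohomology group `H^{n+1}(F, D; A)`, expressed through germs: a
cochain on the ambient space, zero near `D`, which is a cocycle near `F` is near `F` the coboundary
of a cochain that is zero near `D`. -/
def RelAcyclic (n : ℕ) (F D : Set X) : Prop :=
  ∀ ψ ∈ locZeroOn A D (n + 1), d A X (n + 1) ψ ∈ locZeroOn A F (n + 2) →
    ∃ χ ∈ locZeroOn A D n, ψ - d A X n χ ∈ locZeroOn A F (n + 1)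

lemma subsingleton_ASH_succ_iff :
    Subsingleton (ASH A (n + 1) X) ↔ RelAcyclic A n (univ : Set X) ∅ := by
  have d_mem : ∀ {m : ℕ} (φ : Cochain A X m), (φ : QC A X m) ∈ cocycles A X m ↔
      d A X m φ ∈ locZeroOn A univ (m + 1) := fun φ => by
    rw [locZeroOn_univ]
    exact QuotientAddGroup.eq_zero_iff _
  have mem_cobounds : ∀ φ : Cochain A X (n + 1), (φ : QC A X (n + 1)) ∈ cobounds A X (n + 1) ↔
      ∃ χ, φ - d A X n χ ∈ locZeroOn A univ (n + 1) := fun φ => by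
    rw [locZeroOn_univ]
    exact QuotientAddGroup.mk_surjective.exists.trans
      (exists_congr fun χ => eq_comm.trans QuotientAddGroup.eq_iff_sub_mem)
  have : Subsingleton (ASH A (n + 1) X) ↔ cocycles A X (n + 1) ≤ cobounds A X (n + 1) := by
    rw [← AddSubgroup.addSubgroupOf_eq_top]
    exact QuotientAddGroup.subsingleton_iff
  rw [this, SetLike.le_def, QuotientAddGroup.mk_surjective.forall]
  simp [d_mem, mem_cobounds, RelAcyclic, locZeroOn_empty]

lemma relAcyclic_singleton_iff {p : X} {F : Set X} (hp : p ∈ F) :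
    RelAcyclic A n F {p} ↔ RelAcyclic A n F ∅ := by
  simp only [RelAcyclic, locZeroOn_empty, AddSubgroup.mem_top, true_and, true_imp_iff]
  refine ⟨fun h ψ hψ => ?_, fun h ψ hψp hψ => ?_⟩
  · have hpψ : ψ - d A X n (cone p ψ) ∈ locZeroOn A {p} (n + 1) := by
      rw [← cone_d]
      exact cone_mem_locZeroOn_singleton (locZeroOn_anti (singleton_subset_iff.2 hp) hψ)
    obtain ⟨χ, -, hχ⟩ := h _ hpψ (by rwa [map_sub, d_d, sub_zero])
    exact ⟨cone p ψ + χ, by rwa [map_add, ← sub_sub]⟩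
  · obtain ⟨χ, hχ⟩ := h ψ hψ
    have hpχ : d A X n χ ∈ locZeroOn A {p} (n + 1) := by
      rw [← sub_sub_cancel ψ (d A X n χ)]
      exact sub_mem hψp (locZeroOn_anti (singleton_subset_iff.2 hp) hχ)
    have d_cone : d A X n (cone p (d A X n χ)) = d A X n χ := by
      rw [← sub_sub_cancel (d A X n χ) (d A X n (cone p (d A X n χ))), ← cone_d, d_d, map_zero,
        sub_zero]
    exact ⟨cone p (d A X n χ), cone_mem_locZeroOn_singleton hpχ, by rwa [d_cone]⟩

end RelAcyclic

section Excision

variable {A : Type*} [AddCommGroup A] {E K : Type*} {n : ℕ}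

open Classical in
/-- The collapse map `K → OnePoint E` along `f : E → K`: it inverts `f` on `range f` and sends the
complement of `range f` to `∞`. It is meant for open embeddings `f`. -/
def collapse (f : E → K) (k : K) : OnePoint E :=
  if h : ∃ e, f e = k then (h.choose : OnePoint E) else OnePoint.infty

lemma collapse_apply {f : E → K} (hf : Injective f) (e : E) : collapse f (f e) = e := by
  have h : ∃ e', f e' = f e := ⟨e, rfl⟩
  rw [collapse, dif_pos h, hf h.choose_spec]

lemma collapse_eq_infty_iff {f : E → K} {k : K} :
    collapse f k = OnePoint.infty ↔ k ∉ range f := by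
  unfold collapse
  split_ifs with h
  · simpa using h
  · simpa using h

lemma preimage_collapse_image_some {f : E → K} (hf : Injective f) (U : Set E) :
    collapse f ⁻¹' (OnePoint.some '' U) = f '' U := by
  ext k
  by_cases hk : k ∈ range f
  · obtain ⟨e, rfl⟩ := hk
    simp [collapse_apply hf, hf.eq_iff]
  · have := fun e (_ : e ∈ U) (h : f e = k) => hk ⟨e, h⟩
    simpa [collapse_eq_infty_iff.2 hk] using this

lemma pull_pull_collapse {f : E → K} (hf : Injective f) (φ : Cochain A (OnePoint E) n) :
    pull A f n (pull A (collapse f) n φ) = pull A OnePoint.some n φ :=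
  funext fun s => congrArg φ (funext fun i => collapse_apply hf (s i))

variable [TopologicalSpace E] [TopologicalSpace K]

lemma continuous_collapse [T2Space K] {f : E → K} (hf : IsOpenEmbedding f) :
    Continuous (collapse f) := by
  refine continuous_def.2 fun U hU => ?_
  by_cases hi : OnePoint.infty ∈ U
  · have hC := (OnePoint.isOpen_iff_of_mem hi).1 hU
    have hUC : U = (OnePoint.some '' (OnePoint.some ⁻¹' U)ᶜ)ᶜ := by
      ext x
      induction x <;> simp [hi]
    rw [hUC, preimage_compl, preimage_collapse_image_some hf.injective]
    exact (hC.2.image hf.continuous).isClosed.isOpen_compl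
  · have hU' := (OnePoint.isOpen_iff_of_notMem hi).1 hU
    have hUC : U = OnePoint.some '' (OnePoint.some ⁻¹' U) := by
      ext x
      induction x <;> simp [hi]
    rw [hUC, preimage_collapse_image_some hf.injective]
    exact hf.isOpenMap _ hU'

lemma VanishesOn.extendZero_some_mem_locZeroOn {φ : Cochain A E n} {N : Set E}
    (h : VanishesOn φ N) (hN : IsOpen N) (hNc : IsCompact Nᶜ) :
    extendZero OnePoint.some φ ∈ locZeroOn A {(OnePoint.infty : OnePoint E)} n := by
  refine (h.map_extendZero (V := (OnePoint.some '' Nᶜ)ᶜ) ?_).mem_locZeroOn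
    (OnePoint.isOpen_compl_image_coe.2 ⟨hN.isClosed_compl, hNc⟩) (by simp)
  simp [preimage_image_eq _ OnePoint.coe_injective]

lemma exists_extension_vanishing_at_infty [CompactSpace K] [NormalSpace K] {f : E → K}
    (hf : IsOpenEmbedding f) {φ : Cochain A K n} (hφ : φ ∈ locZeroOn A (range f)ᶜ n) :
    ∃ φ' : Cochain A (OnePoint E) n, φ' ∈ locZeroOn A {(OnePoint.infty : OnePoint E)} n ∧
      pull A f n φ - pull A OnePoint.some n φ' ∈ locZeroOn A univ n := by
  have hC : IsClosed (range f)ᶜ := hf.isOpen_range.isClosed_compl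
  obtain ⟨φ₁, N, hN, hCN, hφ₁, hφφ₁⟩ :=
    exists_cutoff hC isClosed_univ (φ := φ) (by rwa [inter_univ])
  have hNc : IsCompact (f ⁻¹' N)ᶜ := by
    rw [← preimage_compl, hf.isInducing.isCompact_preimage_iff (compl_subset_comm.1 hCN)]
    exact hN.isClosed_compl.isCompact
  refine ⟨extendZero OnePoint.some (pull A f n φ₁),
    (hφ₁.map_pull f).extendZero_some_mem_locZeroOn (hN.preimage hf.continuous) hNc, ?_⟩
  rw [pull_extendZero OnePoint.coe_injective, ← neg_mem_iff, neg_sub, ← map_sub]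
  exact pull_mem_locZeroOn hφφ₁ hf.continuous

lemma pull_collapse_mem_locZeroOn [T2Space K] {f : E → K} (hf : IsOpenEmbedding f)
    {φ : Cochain A (OnePoint E) n} (h : φ ∈ locZeroOn A {(OnePoint.infty : OnePoint E)} n) :
    pull A (collapse f) n φ ∈ locZeroOn A (range f)ᶜ n :=
  locZeroOn_anti (fun _ hk => collapse_eq_infty_iff.2 hk)
    (pull_mem_locZeroOn h (continuous_collapse hf))

lemma mem_locZeroOn_univ_onePoint_iff {φ : Cochain A (OnePoint E) n} :
    φ ∈ locZeroOn A univ n ↔ pull A OnePoint.some n φ ∈ locZeroOn A univ n ∧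
      φ ∈ locZeroOn A {(OnePoint.infty : OnePoint E)} n := by
  rw [mem_locZeroOn_univ_iff OnePoint.isOpenEmbedding_coe, OnePoint.compl_range_coe]

variable [CompactSpace K] [T2Space K]

lemma RelAcyclic.of_onePoint {f : E → K} (hf : IsOpenEmbedding f)
    (h : RelAcyclic A n univ {(OnePoint.infty : OnePoint E)}) :
    RelAcyclic A n univ (range f)ᶜ := by
  intro ψ hψ hdψ
  obtain ⟨ψ', hψ', hψψ'⟩ := exists_extension_vanishing_at_infty hf hψ
  have hdψ' : d A _ (n + 1) ψ' ∈ locZeroOn A univ (n + 2) := by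
    refine mem_locZeroOn_univ_onePoint_iff.2 ⟨?_, d_mem_locZeroOn hψ'⟩
    rw [pull_d, ← sub_sub_cancel (pull A f (n + 1) ψ) (pull A OnePoint.some (n + 1) ψ'), map_sub,
      ← pull_d]
    exact sub_mem (pull_mem_locZeroOn hdψ hf.continuous) (d_mem_locZeroOn hψψ')
  obtain ⟨χ, hχ, hψ'χ⟩ := h ψ' hψ' hdψ'
  have hχ' := pull_collapse_mem_locZeroOn hf hχ
  refine ⟨pull A (collapse f) n χ, hχ',
    (mem_locZeroOn_univ_iff hf).2 ⟨?_, sub_mem hψ (d_mem_locZeroOn hχ')⟩⟩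
  have pull_sub : pull A f (n + 1) (ψ - d A K n (pull A (collapse f) n χ)) =
      (pull A f (n + 1) ψ - pull A OnePoint.some (n + 1) ψ') +
        pull A OnePoint.some (n + 1) (ψ' - d A _ n χ) := by
    simp only [map_sub, pull_d, pull_pull_collapse hf.injective]
    abel
  rw [pull_sub]
  exact add_mem hψψ' (mem_locZeroOn_univ_onePoint_iff.1 hψ'χ).1

lemma RelAcyclic.onePoint {f : E → K} (hf : IsOpenEmbedding f)
    (h : RelAcyclic A n univ (range f)ᶜ) :
    RelAcyclic A n univ {(OnePoint.infty : OnePoint E)} := by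
  intro ψ hψ hdψ
  obtain ⟨χ, hχ, hψχ⟩ := h (pull A (collapse f) (n + 1) ψ) (pull_collapse_mem_locZeroOn hf hψ)
    (pull_mem_locZeroOn hdψ (continuous_collapse hf))
  obtain ⟨χ', hχ', hχχ'⟩ := exists_extension_vanishing_at_infty hf hχ
  refine ⟨χ', hχ', mem_locZeroOn_univ_onePoint_iff.2 ⟨?_, sub_mem hψ (d_mem_locZeroOn hχ')⟩⟩
  have pull_sub : pull A OnePoint.some (n + 1) (ψ - d A _ n χ') =
      pull A f (n + 1) (pull A (collapse f) (n + 1) ψ - d A K n χ) +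
        d A E n (pull A f n χ - pull A OnePoint.some n χ') := by
    simp only [map_sub, pull_d, pull_pull_collapse hf.injective]
    abel
  rw [pull_sub]
  exact add_mem (pull_mem_locZeroOn hψχ hf.continuous) (d_mem_locZeroOn hχχ')

lemma relAcyclic_onePoint_iff {f : E → K} (hf : IsOpenEmbedding f) :
    RelAcyclic A n univ {(OnePoint.infty : OnePoint E)} ↔ RelAcyclic A n univ (range f)ᶜ :=
  ⟨.of_onePoint hf, .onePoint hf⟩

end Excision

lemma subsingleton_Hc_succ_iff {A : Type*} [AddCommGroup A] {X : Type*} [TopologicalSpace X]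
    [T2Space X] {n : ℕ} :
    Subsingleton (Hc A (n + 1) X) ↔ RelAcyclic A n univ {(OnePoint.infty : OnePoint X)} := by
  by_cases hX : CompactSpace X
  · rw [Hc, if_pos hX, subsingleton_ASH_succ_iff, relAcyclic_onePoint_iff .id, range_id, compl_univ]
  · rw [Hc, if_neg hX, subsingleton_ASH_succ_iff, relAcyclic_singleton_iff (mem_univ _)]

section Tautness

variable {A : Type*} [AddCommGroup A] {K Z : Type*} {n : ℕ}

open Uniformity UniformSpace

lemma eventually_vanishesOn_ball [UniformSpace K] {S : Set K} (hS : IsCompact S)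
    {φ : Cochain A K n} (h : φ ∈ locZeroOn A S n) :
    ∀ᶠ V in (𝓤 K).smallSets, ∀ x ∈ S, VanishesOn φ (ball x V) := by
  choose U hU hφU using h
  obtain ⟨V, hV, hVU⟩ := lebesgue_number_lemma_nhds' hS hU
  refine eventually_smallSets.2 ⟨V, hV, fun W hWV x hx => ?_⟩
  obtain ⟨y, hy⟩ := hVU x hx
  exact (hφU y y.2).mono ((ball_mono hWV x).trans hy)

lemma exists_forall_eventually_mem_ball [UniformSpace K] [Nonempty Z] (j : Z → K)
    {V : SetRel K K} (hV : V ∈ 𝓤 K) :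
    ∃ r : K → Z, ∀ x ∈ range j, ∀ᶠ z in 𝓝 x, j (r z) ∈ ball x V := by
  obtain ⟨W, hW, hWsymm, hWV⟩ := comp_symm_mem_uniformity_sets hV
  let r (z : K) : Z := Classical.epsilon fun y => (z, j y) ∈ W
  refine ⟨r, ?_⟩
  rintro _ ⟨y, rfl⟩
  filter_upwards [ball_mem_nhds (j y) hW] with z hz
  have hrz : (z, j (r z)) ∈ W := Classical.epsilon_spec (p := fun y => (z, j y) ∈ W)
    ⟨y, hWsymm.symm _ _ hz⟩
  exact ball_mono hWV _ (mem_ball_comp hz hrz)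

lemma pull_mem_locZeroOn_of_forall_ball [UniformSpace K] {S : Set K} {V : SetRel K K}
    {φ : Cochain A K n} (h : ∀ x ∈ S, VanishesOn φ (ball x V)) {ρ : K → K}
    (hρ : ∀ x ∈ S, ∀ᶠ z in 𝓝 x, ρ z ∈ ball x V) : pull A ρ n φ ∈ locZeroOn A S n :=
  fun x hx => ⟨_, hρ x hx, (h x hx).map_pull ρ⟩

lemma prism_mem_locZeroOn_of_forall_ball [UniformSpace K] {S : Set K} {V : SetRel K K}
    (hV : V ∈ 𝓤 K) {φ : Cochain A K (n + 1)} (h : ∀ x ∈ S, VanishesOn φ (ball x V)) {ρ : K → K}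
    (hρ : ∀ x ∈ S, ∀ᶠ z in 𝓝 x, ρ z ∈ ball x V) : prism id ρ φ ∈ locZeroOn A S n :=
  fun x hx => ⟨_, inter_mem (ball_mem_nhds x hV) (hρ x hx), (h x hx).map_prism id ρ⟩

/-- Tautness of compact subspaces. A cochain on `K` is moved into `Z` along a discontinuous map
`r : K → Z` such that `j ∘ r` is close to the identity near `range j`, and the prism operator
compares the two. -/
lemma RelAcyclic.of_isEmbedding [TopologicalSpace K] [CompletelyRegularSpace K]
    [TopologicalSpace Z] [CompactSpace Z] {j : Z → K} (hj : IsEmbedding j) {D : Set K}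
    (hD : IsClosed D) (hDj : D ⊆ range j) (h : RelAcyclic A n univ (j ⁻¹' D)) :
    RelAcyclic A n (range j) D := by
  obtain ⟨u, rfl⟩ := CompletelyRegularSpace.exists_uniformSpace (X := K)
  intro ψ hψ hdψ
  obtain _ | _ := isEmpty_or_nonempty Z
  · exact ⟨0, zero_mem _, fun x ⟨z, _⟩ => isEmptyElim z⟩
  have hjc : IsCompact (range j) := isCompact_range hj.continuous
  have hDc : IsCompact D := hjc.of_isClosed_subset hD hDj
  obtain ⟨χ₀, hχ₀, hω₀⟩ := h (pull A j (n + 1) ψ) (pull_mem_locZeroOn hψ hj.continuous)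
    (preimage_range j ▸ pull_mem_locZeroOn hdψ hj.continuous)
  set χ := extendZero j χ₀
  set ω := extendZero j (pull A j (n + 1) ψ - d A Z n χ₀)
  have hχ : χ ∈ locZeroOn A D n := extendZero_mem_locZeroOn hj.isInducing hDj hχ₀
  have hω : ω ∈ locZeroOn A (range j) (n + 1) :=
    extendZero_mem_locZeroOn hj.isInducing subset_rfl ((preimage_range j).symm ▸ hω₀)
  have pull_j_ω : pull A j (n + 1) ω = pull A j (n + 1) (ψ - d A K n χ) := by
    rw [map_sub, pull_d, pull_extendZero hj.injective, pull_extendZero hj.injective]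
  obtain ⟨V, hV, hV'⟩ := eventually_smallSets.1 <|
    ((eventually_vanishesOn_ball hjc hdψ).and (eventually_vanishesOn_ball hjc hω)).and
      ((eventually_vanishesOn_ball hDc hψ).and (eventually_vanishesOn_ball hDc hχ))
  obtain ⟨⟨hdψV, hωV⟩, hψV, hχV⟩ := hV' V subset_rfl
  obtain ⟨r, hr⟩ := exists_forall_eventually_mem_ball j hV
  have hrD := fun x hx => hr x (hDj hx)
  have pull_ω : pull A (j ∘ r) (n + 1) ω = pull A (j ∘ r) (n + 1) (ψ - d A K n χ) :=
    congrArg (pull A r (n + 1)) pull_j_ω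
  refine ⟨pull A (j ∘ r) n χ - prism id (j ∘ r) ψ, sub_mem
    (pull_mem_locZeroOn_of_forall_ball hχV hrD)
    (prism_mem_locZeroOn_of_forall_ball hV hψV hrD), ?_⟩
  rw [sub_d_pull_sub_prism, ← pull_ω]
  exact sub_mem (pull_mem_locZeroOn_of_forall_ball hωV hr)
    (prism_mem_locZeroOn_of_forall_ball hV hdψV hr)

end Tautness

section CountableUnion

variable {A : Type*} [AddCommGroup A] {K : Type*} [TopologicalSpace K] {n : ℕ}

lemma relAcyclic_of_subsingleton_Hc [CompactSpace K] [T2Space K] {E : Type*} [TopologicalSpace E]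
    {f : E → K} (hf : IsEmbedding f) {F D : Set K} (hF : IsClosed F) (hD : IsClosed D)
    (hDF : D ⊆ F) (hfr : range f = F \ D) (h : Subsingleton (Hc A (n + 1) E)) :
    RelAcyclic A n F D := by
  have := isCompact_iff_compactSpace.1 hF.isCompact
  let g : E → F := codRestrict f F fun e => (hfr ▸ mem_range_self e : f e ∈ F \ D).1
  have range_g : range g = (Subtype.val ⁻¹' D)ᶜ := by
    ext y
    have hy : (y : K) ∈ range f ↔ (y : K) ∉ D := by simp [hfr, y.2]
    rw [mem_compl_iff, mem_preimage, ← hy]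
    exact exists_congr fun e => Subtype.ext_iff
  have hg : IsOpenEmbedding g := ⟨hf.codRestrict F _, by
    rw [range_g]; exact (hD.preimage continuous_subtype_val).isOpen_compl⟩
  have : T2Space E := hf.t2Space
  rw [← Subtype.range_val (s := F)]
  refine .of_isEmbedding .subtypeVal hD (by rwa [Subtype.range_val]) ?_
  rw [← compl_compl (Subtype.val ⁻¹' D), ← range_g, ← relAcyclic_onePoint_iff hg]
  exact subsingleton_Hc_succ_iff.1 h

lemma exists_primitive_union [NormalSpace K] {C₀ C F : Set K} (hC₀ : C₀ ⊆ C) (hC : IsClosed C)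
    (hF : IsClosed F) (h : RelAcyclic A n F (C ∩ F)) {α : Cochain A K (n + 1)}
    (hα : d A K (n + 1) α ∈ locZeroOn A F (n + 2)) {β : Cochain A K n}
    (hβ : β ∈ locZeroOn A C₀ n) (hαβ : α - d A K n β ∈ locZeroOn A C (n + 1)) :
    ∃ β' ∈ locZeroOn A C₀ n, α - d A K n β' ∈ locZeroOn A (C ∪ F) (n + 1) := by
  obtain ⟨χ, hχ, hαχ⟩ := h (α - d A K n β) (locZeroOn_anti inter_subset_left hαβ)
    (by rwa [map_sub, d_d, sub_zero])
  obtain ⟨χ', N, hN, hCN, hχ'N, hχχ'⟩ := exists_cutoff hC hF hχ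
  have hχ' := hχ'N.mem_locZeroOn hN hCN
  refine ⟨β + χ', add_mem hβ (locZeroOn_anti hC₀ hχ'), ?_⟩
  rw [locZeroOn_union, map_add, ← sub_sub]
  refine AddSubgroup.mem_inf.2 ⟨sub_mem hαβ (d_mem_locZeroOn hχ'), ?_⟩
  rw [← sub_sub_sub_cancel_right _ _ (d A K n χ), ← map_sub]
  exact sub_mem hαχ (d_mem_locZeroOn hχχ')

/-- Enlarging each partial domain to a neighbourhood before treating the next piece makes the
interiors of the domains an increasing open cover, so finitely many steps suffice. -/
lemma relAcyclic_univ_of_iUnion_nat [CompactSpace K] [NormalSpace K] {F : ℕ → Set K}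
    (hF : ∀ i, IsClosed (F i)) {C₀ : Set K} (hC₀ : IsClosed C₀) (hU : C₀ ∪ ⋃ i, F i = univ)
    (h : ∀ i D, IsClosed D → C₀ ∩ F i ⊆ D → D ⊆ F i → RelAcyclic A n (F i) D) :
    RelAcyclic A n univ C₀ := by
  intro α hα hdα
  let HasPrimitive (C : Set K) : Prop := IsClosed C ∧ C₀ ⊆ C ∧
    ∃ β ∈ locZeroOn A C₀ n, α - d A K n β ∈ locZeroOn A C (n + 1)
  have hasPrimitive_C₀ : HasPrimitive C₀ :=
    ⟨hC₀, subset_rfl, 0, zero_mem _, by rwa [map_zero, sub_zero]⟩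
  have exists_enlargement : ∀ i C, HasPrimitive C →
      ∃ C', HasPrimitive C' ∧ C ∪ F i ⊆ interior C' := by
    rintro i C ⟨hC, hC₀C, β, hβ, hαβ⟩
    obtain ⟨β', hβ', hαβ'⟩ := exists_primitive_union hC₀C hC (hF i)
      (h i _ (hC.inter (hF i)) (inter_subset_inter_left _ hC₀C) inter_subset_right)
      (locZeroOn_anti (subset_univ _) hdα) hβ hαβ
    obtain ⟨C', hC', hCC', hαC'⟩ := exists_isClosed_superset_mem_locZeroOn (hC.union (hF i)) hαβ'
    exact ⟨C', ⟨hC', hC₀C.trans ((subset_union_left.trans hCC').trans interior_subset), β', hβ',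
      hαC'⟩, hCC'⟩
  choose! next hasPrimitive_next subset_next using exists_enlargement
  let C (k : ℕ) : Set K := k.rec C₀ fun i C => next i C
  have hasPrimitive_C : ∀ k, HasPrimitive (C k) := fun k =>
    k.rec hasPrimitive_C₀ fun i => hasPrimitive_next i _
  have C_union_subset : ∀ k, C k ∪ F k ⊆ interior (C (k + 1)) :=
    fun k => subset_next k _ (hasPrimitive_C k)
  have mono_C : Monotone fun k => interior (C k) := monotone_nat_of_le_succ fun k =>
    interior_subset.trans (subset_union_left.trans (C_union_subset k))
  have cover_C : univ ⊆ ⋃ k, interior (C k) := by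
    rw [← hU, union_subset_iff, iUnion_subset_iff]
    have subset_cover (k : ℕ) : C k ∪ F k ⊆ ⋃ k, interior (C k) :=
      (C_union_subset k).trans (subset_iUnion (fun k => interior (C k)) (k + 1))
    exact ⟨subset_union_left.trans (subset_cover 0),
      fun k => subset_union_right.trans (subset_cover k)⟩
  obtain ⟨k, hk⟩ := isCompact_univ.elim_directed_cover _ (fun _ => isOpen_interior) cover_C
    mono_C.directed_le
  obtain ⟨-, -, β, hβ, hαβ⟩ := hasPrimitive_C k
  exact ⟨β, hβ, locZeroOn_anti (hk.trans interior_subset) hαβ⟩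

lemma relAcyclic_univ_of_iUnion [CompactSpace K] [NormalSpace K] {ι : Sort*} [Countable ι]
    {F : ι → Set K} (hF : ∀ i, IsClosed (F i)) {C₀ : Set K} (hC₀ : IsClosed C₀)
    (hU : C₀ ∪ ⋃ i, F i = univ)
    (h : ∀ i D, IsClosed D → C₀ ∩ F i ⊆ D → D ⊆ F i → RelAcyclic A n (F i) D) :
    RelAcyclic A n univ C₀ := by
  cases isEmpty_or_nonempty ι
  · rw [iUnion_of_empty, union_empty] at hU
    exact fun ψ hψ _ => ⟨0, zero_mem _, by rwa [map_zero, sub_zero, ← hU]⟩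
  · obtain ⟨e, he⟩ := exists_surjective_nat ι
    exact relAcyclic_univ_of_iUnion_nat (fun k => hF (e k)) hC₀ (he.iUnion_comp F ▸ hU)
      fun k => h (e k)

lemma subsingleton_Hc_of_iUnion {B : Type*} [TopologicalSpace B] [T2Space B]
    [LocallyCompactSpace B] {ι : Sort*} [Countable ι] {F : ι → Set B}
    (hF : ∀ i, IsClosed (F i)) (hU : ⋃ i, F i = univ)
    (h : ∀ i, ∀ S ⊆ F i, LocallyCompactSpace S → Subsingleton (Hc A (n + 1) S)) :
    Subsingleton (Hc A (n + 1) B) := by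
  let F' : ι → Set (OnePoint B) := fun i => (OnePoint.some '' (F i)ᶜ)ᶜ
  have hF' : ∀ i, IsClosed (F' i) := fun i =>
    (OnePoint.isOpen_image_coe.2 (hF i).isOpen_compl).isClosed_compl
  have some_mem_F' : ∀ i (b : B), (b : OnePoint B) ∈ F' i ↔ b ∈ F i := by simp [F']
  refine subsingleton_Hc_succ_iff.2 <|
    relAcyclic_univ_of_iUnion (F := F') hF' OnePoint.isClosed_infty ?_ ?_
  · refine eq_univ_of_forall fun q => ?_
    induction q with
    | infty => exact Or.inl rfl
    | coe b => simpa [some_mem_F', ← hU] using mem_univ b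
  intro i D hD hiD hDF
  let S : Set B := OnePoint.some ⁻¹' (F' i \ D)
  have hS : IsLocallyClosed S :=
    ((hF' i).isLocallyClosed.inter hD.isOpen_compl.isLocallyClosed).preimage
      OnePoint.continuous_coe
  have hSF : S ⊆ F i := fun b hb => (some_mem_F' i b).1 hb.1
  refine relAcyclic_of_subsingleton_Hc (f := fun b : S => (b : OnePoint B))
    (OnePoint.isOpenEmbedding_coe.isEmbedding.comp .subtypeVal) (hF' i) hD hDF ?_
    (h i S hSF hS.locallyCompactSpace)
  change range (OnePoint.some ∘ Subtype.val) = _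
  rw [range_comp, Subtype.range_val]
  refine image_preimage_eq_of_subset fun q hq => OnePoint.ne_infty_iff_exists.1 ?_
  rintro rfl
  exact hq.2 (hiD ⟨rfl, hq.1⟩)

end CountableUnion

section Invariance

variable {A : Type*} [AddCommGroup A] {X Y : Type*} [TopologicalSpace X] [TopologicalSpace Y]
  {n : ℕ}

lemma ASHmap_leftInverse (e : X ≃ₜ Y) :
    LeftInverse (ASHmap A e.continuous n) (ASHmap A e.symm.continuous n) := by
  intro c
  obtain ⟨⟨q, hq⟩, rfl⟩ := QuotientAddGroup.mk_surjective c
  obtain ⟨φ, rfl⟩ := QuotientAddGroup.mk_surjective q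
  have pull_pull : pull A e n (pull A e.symm n φ) = φ :=
    funext fun s => congrArg φ (funext fun i => e.symm_apply_apply (s i))
  exact congrArg QuotientAddGroup.mk (Subtype.ext (congrArg QuotientAddGroup.mk pull_pull))

lemma nontrivial_ASH_of_homeomorph (e : X ≃ₜ Y) [Nontrivial (ASH A n X)] :
    Nontrivial (ASH A n Y) :=
  (ASHmap_leftInverse e).injective.nontrivial

lemma nontrivial_Hc_of_homeomorph (e : X ≃ₜ Y) (h : Nontrivial (Hc A n X)) :
    Nontrivial (Hc A n Y) := by
  unfold Hc at h ⊢
  split_ifs with hY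
  · rw [if_pos e.symm.compactSpace] at h
    exact nontrivial_ASH_of_homeomorph e
  · rw [if_neg fun hX : CompactSpace X => hY e.compactSpace] at h
    exact nontrivial_ASH_of_homeomorph e.onePointCongr

lemma le_cohDim_of_isEmbedding [LocallyCompactSpace Y] {f : Y → X} (hf : IsEmbedding f)
    (h : Nontrivial (Hc A n Y)) : (n : ℕ∞) ≤ cohDim A X := by
  let e := hf.toHomeomorph
  exact le_sSup ⟨n, rfl, range f, e.symm.isClosedEmbedding.locallyCompactSpace,
    nontrivial_Hc_of_homeomorph e h⟩

lemma cohDim_le_of_isEmbedding {f : Y → X} (hf : IsEmbedding f) : cohDim A Y ≤ cohDim A X := by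
  refine sSup_le ?_
  rintro _ ⟨n, rfl, B, _, hB⟩
  exact le_cohDim_of_isEmbedding (hf.comp .subtypeVal) hB

end Invariance

end AS

theorem cohDim_countable_union_general {X : Type*} [TopologicalSpace X] [T2Space X]
    (A : Type*) [AddCommGroup A] {ι : Sort*} [Countable ι] {F : ι → Set X}
    (hF : ∀ i, IsClosed (F i)) (hU : ⋃ i, F i = univ) :
    cohDim A X = ⨆ i, cohDim A (F i) := by
  refine le_antisymm (sSup_le ?_)
    (iSup_le fun i => AS.cohDim_le_of_isEmbedding Topology.IsEmbedding.subtypeVal)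
  rintro _ ⟨n, rfl, B, _, hB⟩
  obtain _ | n := n
  · simp
  by_contra hlt
  refine not_subsingleton_iff_nontrivial.2 hB <|
    AS.subsingleton_Hc_of_iUnion (F := fun i => (Subtype.val ⁻¹' F i : Set B))
      (fun i => (hF i).preimage continuous_subtype_val)
      (by rw [← preimage_iUnion, hU, preimage_univ]) fun i S hS _ => ?_
  refine not_nontrivial_iff_subsingleton.1 fun hn => hlt ?_
  have hf : Topology.IsEmbedding fun x : S => (⟨x.1.1, hS x.2⟩ : F i) :=
    (Topology.IsEmbedding.subtypeVal.comp Topology.IsEmbedding.subtypeVal).codRestrict _ _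
  exact (AS.le_cohDim_of_isEmbedding hf hn).trans (le_iSup (fun i => cohDim A (F i)) i)

/-- **Theorem 11** (Countable union theorem).  If a compact metric space `X` is the union of
countably many closed subsets `X_i`, then `dim_A X = sup_i dim_A X_i` for every abelian
group `A`. -/
theorem cohDim_countable_union (X : Type) [MetricSpace X] [CompactSpace X]
    (A : Type*) [AddCommGroup A] (Xi : ℕ → Set X)
    (hclosed : ∀ i, IsClosed (Xi i)) (hunion : (⋃ i, Xi i) = Set.univ) :
    cohDim A X = ⨆ i, cohDim A (Xi i) :=
  cohDim_countable_union_general A hclosed hunion
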